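/- Let ω be a modulus of continuity of order n ∈ ℕ, let D ⊂ ℝ^d be a bounded Lipschitz domain, let T be a homogeneous C^{n+1}-smooth Calderón–Zygmund operator, and let C₀ > 0. Then there exists a constant C such that for every f ∈ 𝒞_ω(D), every cube Q with 2Q ⊂ D, and every polynomial P_Q ∈ 𝒫_n of near best approximation with constant C₀ for f on Q, the function f₂ = (f − P_Q)·χ_{2Q} satisfies: the principal value T f₂(y) = lim_{ε→0} ∫_{|y−x|>ε} f₂(x)·K(y−x) dx exists for almost every y ∈ Q, and (1/|Q|)·∫_Q |T f₂(y)| dy ≤ C·ω(ℓ(Q))·(‖f‖_{ω,D} + ‖f‖_{L¹(D)}). -/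

import Mathlib

open MeasureTheory Filter Set Metric
open scoped ENNReal Topology InnerProductSpace

noncomputable section

/-- The axis-parallel closed cube in `ℝ^d` with center `x₀` and side length `l`. -/
def cube {d : ℕ} (x₀ : EuclideanSpace ℝ (Fin d)) (l : ℝ) : Set (EuclideanSpace ℝ (Fin d)) :=
  {x | ∀ i, |x i - x₀ i| ≤ l / 2}

/-- `𝒫_n`: functions on `ℝ^d` given by polynomials of total degree at most `n`. -/
def PolyLE (d n : ℕ) : Set (EuclideanSpace ℝ (Fin d) → ℝ) :=
  {P | ∃ p : MvPolynomial (Fin d) ℝ, p.totalDegree ≤ n ∧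
    ∀ x, MvPolynomial.eval (fun i => x i) p = P x}

/-- The Campanato-type Zygmund seminorm `‖f‖_{ω,D}` (valued in `ℝ≥0∞`). -/
def zygSeminorm {d : ℕ} (ω : ℝ → ℝ) (n : ℕ) (D : Set (EuclideanSpace ℝ (Fin d)))
    (f : EuclideanSpace ℝ (Fin d) → ℝ) : ℝ≥0∞ :=
  ⨆ (x₀ : EuclideanSpace ℝ (Fin d)) (l : ℝ) (_ : 0 < l) (_ : cube x₀ l ⊆ D),
    ⨅ (P : EuclideanSpace ℝ (Fin d) → ℝ) (_ : P ∈ PolyLE d n),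
      (ENNReal.ofReal (ω l * l ^ d))⁻¹ * ∫⁻ x in cube x₀ l, ENNReal.ofReal |f x - P x|

/-- The `L¹(D)` norm (valued in `ℝ≥0∞`). -/
def l1Norm {d : ℕ} (D : Set (EuclideanSpace ℝ (Fin d)))
    (f : EuclideanSpace ℝ (Fin d) → ℝ) : ℝ≥0∞ :=
  ∫⁻ x in D, ENNReal.ofReal |f x|

/-- The two regularity conditions of order `m` for a modulus of continuity:
`ω(t)/t^q` almost decreasing for some `m ≤ q < m+1`, and `ω(t)/t^r` almost
increasing for some `m-1 < r < m`. -/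
def ModulusConds (ω : ℝ → ℝ) (m : ℕ) : Prop :=
  (∃ q : ℝ, (m : ℝ) ≤ q ∧ q < (m : ℝ) + 1 ∧ ∃ C : ℝ, 0 < C ∧
      ∀ s t : ℝ, 1 < s → 0 < t → ω (s * t) ≤ C * s ^ q * ω t) ∧
  (∃ r : ℝ, (m : ℝ) - 1 < r ∧ r < (m : ℝ) ∧ ∃ C : ℝ, 0 < C ∧
      ∀ s t : ℝ, 0 < s → s < 1 → 0 < t → ω (s * t) ≤ C * s ^ r * ω t)

/-- `ω` is a modulus of continuity of order `n`: continuous, increasing, `ω(0)=0`,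
nonnegative, and `n` is the smallest positive integer satisfying the two
regularity conditions. -/
structure IsModulusOfOrder (ω : ℝ → ℝ) (n : ℕ) : Prop where
  continuousOn : ContinuousOn ω (Set.Ici 0)
  monotoneOn : MonotoneOn ω (Set.Ici 0)
  nonneg : ∀ t, 0 ≤ t → 0 ≤ ω t
  map_zero : ω 0 = 0
  npos : 0 < n
  conds : ModulusConds ω n
  minimal : ∀ m : ℕ, 0 < m → ModulusConds ω m → n ≤ m

/-- `ξ(r) = ∫_r^1 ω(t) t^{-n-1} dt`. -/
def xi (ω : ℝ → ℝ) (n : ℕ) (r : ℝ) : ℝ :=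
  ∫ t in Set.Ioc r 1, ω t / t ^ (n + 1)

/-- The associated modulus of continuity `ω̃(x) = ω(x)/max{1, ξ(x)}`. -/
def omegaTilde (ω : ℝ → ℝ) (n : ℕ) (x : ℝ) : ℝ :=
  ω x / max 1 (xi ω n x)

/-- `D ⊂ ℝ^d` is a bounded Lipschitz domain: it is open, connected, bounded, and near
every boundary point, after a rigid motion, it coincides inside an `R`-window with the
region above the graph of a Lipschitz function (with Lipschitz constant at most `δ`). -/
def IsLipschitzDomain {d : ℕ} (D : Set (EuclideanSpace ℝ (Fin d))) : Prop :=
  IsOpen D ∧ IsConnected D ∧ Bornology.IsBounded D ∧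
  ∃ δ R : ℝ, 0 < δ ∧ 0 < R ∧
    ∀ a ∈ frontier D,
      ∃ (g : EuclideanSpace ℝ (Fin d) ≃ᵢ EuclideanSpace ℝ (Fin d)) (j : Fin d)
        (A : EuclideanSpace ℝ (Fin d) → ℝ),
        g a = 0 ∧
        LipschitzWith (Real.toNNReal δ) A ∧
        (∀ x y : EuclideanSpace ℝ (Fin d), (∀ i, i ≠ j → x i = y i) → A x = A y) ∧
        (g '' D) ∩ cube 0 R = {x ∈ cube (0 : EuclideanSpace ℝ (Fin d)) R | A x < x j}

/-- `Ω` is the density of a `C^k`-smooth homogeneous Calderón–Zygmund kernel: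
homogeneous of degree `0`, `C^k` away from the origin, with zero mean on the
unit sphere. -/
structure IsCZDensity (d : ℕ) (k : ℕ∞) (Ω : EuclideanSpace ℝ (Fin d) → ℝ) : Prop where
  homog : ∀ c : ℝ, 0 < c → ∀ x : EuclideanSpace ℝ (Fin d), Ω (c • x) = Ω x
  smooth : ContDiffOn ℝ k Ω {x : EuclideanSpace ℝ (Fin d) | x ≠ 0}
  meanZero : ∫ x : Metric.sphere (0 : EuclideanSpace ℝ (Fin d)) 1,
      Ω x ∂((volume : Measure (EuclideanSpace ℝ (Fin d))).toSphere) = 0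

/-- `g = T_D f`: `g` vanishes off `D` and, for a.e. `y ∈ D`, `g y` is the principal
value `lim_{ε→0+} ∫_{x ∈ D, |y-x|>ε} f(x) K(y-x) dx` (here `f` is implicitly
multiplied by `χ_D`). -/
def IsRestrictedCZ {d : ℕ} (D : Set (EuclideanSpace ℝ (Fin d)))
    (K : EuclideanSpace ℝ (Fin d) → ℝ) (f g : EuclideanSpace ℝ (Fin d) → ℝ) : Prop :=
  (∀ y, y ∉ D → g y = 0) ∧
  ∀ᵐ y ∂(volume.restrict D),
    Tendsto (fun ε : ℝ => ∫ x in {x ∈ D | ε < dist y x}, f x * K (y - x))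
      (𝓝[>] (0 : ℝ)) (𝓝 (g y))

/-- `P` is a polynomial of near best approximation (with constant `C₀`) for `f`
on the cube with center `x₀` and side length `l`. -/
def IsNearBestApprox {d : ℕ} (ω : ℝ → ℝ) (n : ℕ) (D : Set (EuclideanSpace ℝ (Fin d)))
    (f : EuclideanSpace ℝ (Fin d) → ℝ) (C₀ : ℝ) (x₀ : EuclideanSpace ℝ (Fin d)) (l : ℝ)
    (P : EuclideanSpace ℝ (Fin d) → ℝ) : Prop :=
  P ∈ PolyLE d n ∧
    (ENNReal.ofReal (l ^ d))⁻¹ * ∫⁻ x in cube x₀ l, ENNReal.ofReal |f x - P x| ≤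
      ENNReal.ofReal (C₀ * ω l) * zygSeminorm ω n D f


/-! ### Cubes -/

lemma cube_isClosed {d : ℕ} (y : EuclideanSpace ℝ (Fin d)) (t : ℝ) : IsClosed (cube y t) := by
  have : cube y t = ⋂ i, {x : EuclideanSpace ℝ (Fin d) | |x i - y i| ≤ t / 2} := by
    ext x; simp [cube]
  rw [this]
  exact isClosed_iInter fun i => isClosed_le (by fun_prop) continuous_const

lemma cube_measurable {d : ℕ} (y : EuclideanSpace ℝ (Fin d)) (t : ℝ) :
    MeasurableSet (cube y t) := (cube_isClosed y t).measurableSet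

lemma cube_volume {d : ℕ} (y : EuclideanSpace ℝ (Fin d)) (t : ℝ) (ht : 0 ≤ t) :
    volume (cube y t) = ENNReal.ofReal (t ^ d) := by
  have h := (PiLp.volume_preserving_toLp (Fin d)).measure_preimage
    (cube_measurable y t).nullMeasurableSet
  rw [← h]
  have : (WithLp.toLp 2 : (Fin d → ℝ) → EuclideanSpace ℝ (Fin d)) ⁻¹' (cube y t)
      = Set.Icc (fun i => y i - t / 2) (fun i => y i + t / 2) := by
    ext x
    simp only [cube, mem_preimage, mem_ofPred_eq, abs_le, mem_Icc, Pi.le_def]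
    constructor
    · intro h; exact ⟨fun i => by linarith [(h i).1], fun i => by linarith [(h i).2]⟩
    · rintro ⟨h1, h2⟩ i; exact ⟨by linarith [h1 i], by linarith [h2 i]⟩
  rw [this, Real.volume_Icc_pi]
  simp only [show ∀ i, y i + t / 2 - (y i - t / 2) = t from fun i => by ring]
  simp [ENNReal.ofReal_pow ht]

lemma cube_volume_real {d : ℕ} (y : EuclideanSpace ℝ (Fin d)) (t : ℝ) (ht : 0 ≤ t) :
    volume.real (cube y t) = t ^ d := by
  rw [measureReal_def, cube_volume y t ht, ENNReal.toReal_ofReal (by positivity)]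

lemma cube_volume_lt {d : ℕ} (y : EuclideanSpace ℝ (Fin d)) (t : ℝ) (ht : 0 ≤ t) :
    volume (cube y t) < ⊤ := by
  rw [cube_volume y t ht]; exact ENNReal.ofReal_lt_top

lemma cube_isCompact {d : ℕ} (y : EuclideanSpace ℝ (Fin d)) (t : ℝ) : IsCompact (cube y t) := by
  have hc : IsCompact (Set.Icc (fun i => y i - t / 2) (fun i => y i + t / 2)) := isCompact_Icc
  have := hc.image (PiLp.continuous_toLp 2 (fun _ : Fin d => ℝ))
  refine this.of_isClosed_subset (cube_isClosed y t) ?_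
  intro x hx
  refine ⟨WithLp.ofLp x, ?_, rfl⟩
  simp only [cube, mem_ofPred_eq, abs_le] at hx
  exact ⟨fun i => by have := (hx i).1; simp only; linarith,
    fun i => by have := (hx i).2; simp only; linarith⟩

lemma cube_mono {d : ℕ} (y : EuclideanSpace ℝ (Fin d)) {s t : ℝ} (h : s ≤ t) :
    cube y s ⊆ cube y t := fun x hx i => (hx i).trans (by linarith)

lemma cube_center_subset {d : ℕ} {x₀ y : EuclideanSpace ℝ (Fin d)} {l : ℝ}
    (hy : y ∈ cube x₀ l) : cube y l ⊆ cube x₀ (2 * l) := by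
  intro x hx i
  have h1 := hx i
  have h2 := hy i
  rw [abs_le] at *
  constructor <;> linarith [h1.1, h1.2, h2.1, h2.2]

/-- change of variables between a cube and the unit cube -/
lemma cube_integral_scale {d : ℕ} (F : EuclideanSpace ℝ (Fin d) → ℝ)
    (y : EuclideanSpace ℝ (Fin d)) (t : ℝ) (ht : 0 < t) :
    ∫ x in cube y t, F x = t ^ d * ∫ z in cube 0 1, F (y + t • z) := by
  rw [← integral_indicator (cube_measurable _ _), ← integral_indicator (cube_measurable _ _)]
  have h1 : ∀ z : EuclideanSpace ℝ (Fin d),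
      (cube 0 1).indicator (fun z => F (y + t • z)) z
        = (fun w => (cube y t).indicator F (y + w)) (t • z) := by
    intro z
    have : z ∈ cube (0 : EuclideanSpace ℝ (Fin d)) 1 ↔ y + t • z ∈ cube y t := by
      simp only [cube, mem_ofPred_eq]
      refine forall_congr' fun i => ?_
      simp only [PiLp.zero_apply, sub_zero, PiLp.add_apply, PiLp.smul_apply, smul_eq_mul,
        add_sub_cancel_left, abs_mul, abs_of_pos ht]
      rw [div_eq_mul_one_div t 2, mul_le_mul_iff_right₀ ht]
    by_cases hz : z ∈ cube (0 : EuclideanSpace ℝ (Fin d)) 1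
    · simp [indicator, hz, this.1 hz]
    · have h' : y + t • z ∉ cube y t := fun h => hz (this.2 h)
      rw [indicator_of_notMem hz]
      simp only
      rw [indicator_of_notMem h']
  rw [integral_congr_ae (Eventually.of_forall h1)]
  rw [Measure.integral_comp_smul_of_nonneg volume
    (fun w => (cube y t).indicator F (y + w)) t (hR := ht.le)]
  rw [integral_add_left_eq_self (fun w => (cube y t).indicator F w) y]
  simp only [finrank_euclideanSpace, Fintype.card_fin, smul_eq_mul]
  field_simp

/-! ### Polynomials -/

lemma PolyLE.continuous {d n : ℕ} {P : EuclideanSpace ℝ (Fin d) → ℝ} (hP : P ∈ PolyLE d n) :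
    Continuous P := by
  obtain ⟨p, -, hp⟩ := hP
  have : P = fun x => MvPolynomial.eval (fun i => x i) p := funext fun x => (hp x).symm
  rw [this]
  exact (MvPolynomial.continuous_eval p).comp (by fun_prop)

lemma PolyLE.sub {d n : ℕ} {P R : EuclideanSpace ℝ (Fin d) → ℝ} (hP : P ∈ PolyLE d n)
    (hR : R ∈ PolyLE d n) : (fun x => P x - R x) ∈ PolyLE d n := by
  obtain ⟨p, hp, hp'⟩ := hP
  obtain ⟨r, hr, hr'⟩ := hR
  exact ⟨p - r, (MvPolynomial.totalDegree_sub p r).trans (max_le hp hr), fun x => by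
    simp [hp', hr']⟩

lemma PolyLE.const {d n : ℕ} (c : ℝ) : (fun _ => c) ∈ PolyLE d n :=
  ⟨MvPolynomial.C c, by simp, fun x => by simp⟩

lemma PolyLE.affine {d n : ℕ} {P : EuclideanSpace ℝ (Fin d) → ℝ} (hP : P ∈ PolyLE d n)
    (y : EuclideanSpace ℝ (Fin d)) (t : ℝ) : (fun z => P (y + t • z)) ∈ PolyLE d n := by
  obtain ⟨p, hp, hp'⟩ := hP
  refine ⟨∑ s ∈ p.support, MvPolynomial.C (p.coeff s) *
    ∏ i, (MvPolynomial.C (y i) + MvPolynomial.C t * MvPolynomial.X i) ^ (s i), ?_, ?_⟩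
  · refine (MvPolynomial.totalDegree_finsetSum_le (d := n) fun s hs => ?_)
    refine (MvPolynomial.totalDegree_mul _ _).trans ?_
    rw [MvPolynomial.totalDegree_C, zero_add]
    refine (MvPolynomial.totalDegree_finsetProd _ _).trans ?_
    refine le_trans ?_ ((MvPolynomial.le_totalDegree hs).trans hp)
    rw [Finsupp.sum_fintype _ _ (by simp)]
    refine Finset.sum_le_sum fun i _ => ?_
    refine (MvPolynomial.totalDegree_pow _ _).trans ?_
    have : (MvPolynomial.C (y i) + MvPolynomial.C t * MvPolynomial.X i :
        MvPolynomial (Fin d) ℝ).totalDegree ≤ 1 := by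
      refine (MvPolynomial.totalDegree_add _ _).trans (max_le (by simp) ?_)
      refine (MvPolynomial.totalDegree_mul _ _).trans ?_
      simp
    calc _ ≤ s i * 1 := Nat.mul_le_mul_left _ this
      _ = _ := by simp
  · intro z
    simp only
    rw [← hp', MvPolynomial.eval_eq' _ p]
    simp

lemma poly_coeff_bound (d n : ℕ) (s : Fin d →₀ ℕ) : ∃ M : ℝ, 0 ≤ M ∧
    ∀ p : MvPolynomial (Fin d) ℝ, p.totalDegree ≤ n →
      |p.coeff s| ≤ M * ∫ z in cube (0 : EuclideanSpace ℝ (Fin d)) 1,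
        |MvPolynomial.eval (fun i => z i) p| := by
  set V := MvPolynomial.restrictTotalDegree (Fin d) ℝ n
  set μ : Measure (EuclideanSpace ℝ (Fin d)) := volume.restrict (cube 0 1)
  have hcont : ∀ p : MvPolynomial (Fin d) ℝ, Continuous
      (fun z : EuclideanSpace ℝ (Fin d) => MvPolynomial.eval (fun i => z i) p) := fun p =>
    (MvPolynomial.continuous_eval p).comp (by fun_prop)
  have hint : ∀ p : MvPolynomial (Fin d) ℝ, Integrable
      (fun z : EuclideanSpace ℝ (Fin d) => MvPolynomial.eval (fun i => z i) p) μ := fun p =>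
    (hcont p).continuousOn.integrableOn_compact (cube_isCompact 0 1)
  let φ : V →ₗ[ℝ] Lp ℝ 1 μ :=
    { toFun := fun p => (hint p.1).toL1 _
      map_add' := fun p q => by
        rw [← Integrable.toL1_add]
        congr 1
        ext z; simp
      map_smul' := fun c p => by
        rw [RingHom.id_apply, ← Integrable.toL1_smul]
        congr 1
        ext z; simp }
  have hφ : Function.Injective φ := by
    rw [← LinearMap.ker_eq_bot, LinearMap.ker_eq_bot']
    intro p hp
    have h0 : (hint p.1).toL1 _ = 0 := hp
    have h0 : (fun z : EuclideanSpace ℝ (Fin d) => MvPolynomial.eval (fun i => z i) p.1) =ᵐ[μ]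
        (fun _ => (0 : ℝ)) := by
      have h1 := (hint p.1).coeFn_toL1
      rw [h0] at h1
      exact h1.symm.trans (Lp.coeFn_zero _ _ _)
    set U : Set (EuclideanSpace ℝ (Fin d)) := {x | ∀ i, x i ∈ Set.Ioo (-(1/2) : ℝ) (1/2)}
    have hU : IsOpen U := by
      have : U = ⋂ i, {x : EuclideanSpace ℝ (Fin d) | x i ∈ Set.Ioo (-(1/2) : ℝ) (1/2)} := by
        ext x; simp [U]
      rw [this]
      exact isOpen_iInter_of_finite fun i => isOpen_Ioo.preimage (by fun_prop)
    have hUs : U ⊆ cube 0 1 := by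
      intro x hx i
      have := hx i
      simp only [PiLp.zero_apply, sub_zero, abs_le]
      exact ⟨this.1.le, this.2.le⟩
    have h1 := ae_restrict_of_ae_restrict_of_subset hUs h0
    have h2 := Measure.eqOn_open_of_ae_eq (μ := volume) h1 hU (hcont p.1).continuousOn
      continuousOn_const
    apply Subtype.ext
    refine MvPolynomial.funext_set (fun _ => Set.Ioo (-(1/2) : ℝ) (1/2))
      (fun _ => Set.Ioo_infinite (by norm_num)) ?_
    intro x hx
    have h3 := h2 (show WithLp.toLp 2 x ∈ U from fun i => hx i (Set.mem_univ i))
    simpa using h3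
  let e := LinearEquiv.ofInjective φ hφ
  let c : V →ₗ[ℝ] ℝ := (MvPolynomial.lcoeff ℝ s).comp V.subtype
  let L : LinearMap.range φ →ₗ[ℝ] ℝ := c.comp e.symm.toLinearMap
  let L' : LinearMap.range φ →L[ℝ] ℝ := LinearMap.toContinuousLinearMap L
  refine ⟨‖L'‖, L'.opNorm_nonneg, fun p hp => ?_⟩
  have hpV : p ∈ V := (MvPolynomial.mem_restrictTotalDegree _ _ _).2 hp
  have h := L'.le_opNorm (e ⟨p, hpV⟩)
  have h1 : L' (e ⟨p, hpV⟩) = p.coeff s := by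
    simp [L', L, c]
  have h2 : ‖e ⟨p, hpV⟩‖ = ∫ z in cube (0 : EuclideanSpace ℝ (Fin d)) 1,
        |MvPolynomial.eval (fun i => z i) p| := by
    change ‖(hint p).toL1 _‖ = _
    rw [L1.norm_of_fun_eq_integral_norm]
    rfl
  rw [h1, h2] at h
  exact h

lemma poly_unit_bound (d n : ℕ) : ∃ M : ℝ, 1 ≤ M ∧
    ∀ P ∈ PolyLE d n, ∀ (lam : ℝ) (x : EuclideanSpace ℝ (Fin d)), 0 ≤ lam → lam ≤ 1 →
      (∀ i, |x i| ≤ lam) →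
      |P x - P 0| ≤ M * lam * ∫ z in cube (0 : EuclideanSpace ℝ (Fin d)) 1, |P z| ∧
      |P x| ≤ M * ∫ z in cube (0 : EuclideanSpace ℝ (Fin d)) 1, |P z| := by
  choose M hM0 hM using poly_coeff_bound d n
  -- finite set of exponents
  have hfin : {s : Fin d →₀ ℕ | s.degree ≤ n}.Finite := by
    refine (Set.finite_Iic (Finsupp.equivFunOnFinite.symm (fun _ : Fin d => n))).subset ?_
    intro s hs i
    exact (Finsupp.le_degree i s).trans hs
  set T := hfin.toFinset
  have hMT : 0 ≤ ∑ s ∈ T, M s := Finset.sum_nonneg fun s _ => hM0 s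
  refine ⟨1 + ∑ s ∈ T, M s, by linarith, ?_⟩
  rintro P ⟨p, hp, hp'⟩ lam x hl0 hl1 hx
  set I := ∫ z in cube (0 : EuclideanSpace ℝ (Fin d)) 1, |P z|
  have hI0 : 0 ≤ I := integral_nonneg fun z => abs_nonneg _
  have hc : ∀ s, |p.coeff s| ≤ M s * I := by
    intro s
    have := hM s p hp
    simp_rw [hp'] at this
    exact this
  have hPx : ∀ x, P x = ∑ s ∈ T, p.coeff s * ∏ i, x i ^ (s i) := by
    intro x
    rw [← hp', MvPolynomial.eval_eq']
    refine Finset.sum_subset ?_ ?_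
    · intro s hs
      simp only [T, Set.Finite.mem_toFinset, mem_ofPred_eq]
      exact (MvPolynomial.le_totalDegree hs).trans hp
    · intro s _ hs
      simp [MvPolynomial.notMem_support_iff.1 hs]
  have hmon : ∀ s : Fin d →₀ ℕ, |∏ i, x i ^ (s i)| ≤ 1 := by
    intro s
    rw [Finset.abs_prod]
    refine Finset.prod_le_one (fun i _ => abs_nonneg _) fun i _ => ?_
    rw [abs_pow]
    exact pow_le_one₀ (abs_nonneg _) ((hx i).trans hl1)
  have hmon2 : ∀ s : Fin d →₀ ℕ, |∏ i, x i ^ (s i) - ∏ i : Fin d, (0 : ℝ) ^ (s i)| ≤ lam := by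
    intro s
    by_cases hs : s = 0
    · simp [hs, hl0]
    · obtain ⟨j, hj⟩ : ∃ j, s j ≠ 0 := by
        by_contra! h
        exact hs (Finsupp.ext h)
      rw [Finset.prod_eq_zero (i := j) (f := fun i => (0 : ℝ) ^ (s i)) (Finset.mem_univ j)
        (by simp [hj]), sub_zero, Finset.abs_prod, ← Finset.mul_prod_erase _ _ (Finset.mem_univ j)]
      have h1 : |x j ^ s j| ≤ lam := by
        rw [abs_pow]
        exact (pow_le_of_le_one (abs_nonneg _) ((hx j).trans hl1) hj).trans (hx j)
      have h2 : ∏ i ∈ Finset.univ.erase j, |x i ^ s i| ≤ 1 := by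
        refine Finset.prod_le_one (fun i _ => abs_nonneg _) fun i _ => ?_
        rw [abs_pow]
        exact pow_le_one₀ (abs_nonneg _) ((hx i).trans hl1)
      calc _ ≤ lam * 1 := mul_le_mul h1 h2 (Finset.prod_nonneg fun _ _ => abs_nonneg _) hl0
        _ = lam := mul_one _
  constructor
  · have : P x - P 0 = ∑ s ∈ T, p.coeff s * (∏ i, x i ^ (s i) - ∏ i : Fin d, (0 : ℝ) ^ (s i)) := by
      rw [hPx x, hPx 0, ← Finset.sum_sub_distrib]
      refine Finset.sum_congr rfl fun s _ => ?_
      simp [mul_sub]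
    rw [this]
    calc _ ≤ ∑ s ∈ T, |p.coeff s * (∏ i, x i ^ (s i) - ∏ i : Fin d, (0 : ℝ) ^ (s i))| :=
          Finset.abs_sum_le_sum_abs _ _
      _ ≤ ∑ s ∈ T, M s * I * lam := by
          refine Finset.sum_le_sum fun s _ => ?_
          rw [abs_mul]
          exact mul_le_mul (hc s) (hmon2 s) (abs_nonneg _) (mul_nonneg (hM0 s) hI0)
      _ = (∑ s ∈ T, M s) * lam * I := by
          rw [Finset.sum_mul, Finset.sum_mul]
          exact Finset.sum_congr rfl fun s _ => by ring
      _ ≤ _ := by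
          have : 0 ≤ lam * I := by positivity
          nlinarith
  · rw [hPx x]
    calc _ ≤ ∑ s ∈ T, |p.coeff s * ∏ i, x i ^ (s i)| :=
          Finset.abs_sum_le_sum_abs _ _
      _ ≤ ∑ s ∈ T, M s * I * 1 := by
          refine Finset.sum_le_sum fun s _ => ?_
          rw [abs_mul]
          exact mul_le_mul (hc s) (hmon s) (abs_nonneg _) (mul_nonneg (hM0 s) hI0)
      _ = (∑ s ∈ T, M s) * I := by
          rw [Finset.sum_mul]
          exact Finset.sum_congr rfl fun s _ => by ring
      _ ≤ _ := by nlinarith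

lemma poly_bound (d n : ℕ) : ∃ M : ℝ, 1 ≤ M ∧
    ∀ P ∈ PolyLE d n, ∀ (y : EuclideanSpace ℝ (Fin d)) (t lam : ℝ)
      (x : EuclideanSpace ℝ (Fin d)), 0 < t → 0 ≤ lam → lam ≤ 1 →
      (∀ i, |x i - y i| ≤ lam * t) →
      |P x - P y| * t ^ d ≤ M * lam * ∫ z in cube y t, |P z| ∧
      |P x| * t ^ d ≤ M * ∫ z in cube y t, |P z| := by
  obtain ⟨M, hM1, hM⟩ := poly_unit_bound d n
  refine ⟨M, hM1, fun P hP y t lam x ht hl0 hl1 hx => ?_⟩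
  have h := hM _ (PolyLE.affine hP y t) lam (t⁻¹ • (x - y)) hl0 hl1 (by
    intro i
    simp only [PiLp.smul_apply, PiLp.sub_apply, smul_eq_mul, abs_mul, abs_inv, abs_of_pos ht]
    rw [inv_mul_le_iff₀ ht, mul_comm]
    exact hx i)
  simp only [smul_zero, add_zero, smul_inv_smul₀ ht.ne', add_sub_cancel] at h
  rw [cube_integral_scale _ y t ht]
  have htd : 0 < t ^ d := by positivity
  constructor
  · calc _ ≤ _ := mul_le_mul_of_nonneg_right h.1 htd.le
      _ = _ := by ring
  · calc _ ≤ _ := mul_le_mul_of_nonneg_right h.2 htd.le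
      _ = _ := by ring

/-! ### Campanato iteration at a point -/

lemma tri_int {d : ℕ} {s : Set (EuclideanSpace ℝ (Fin d))} {u v w : EuclideanSpace ℝ (Fin d) → ℝ}
    (hu : IntegrableOn u s) (hv : IntegrableOn v s) (hw : IntegrableOn w s) :
    ∫ x in s, |u x - w x| ≤ (∫ x in s, |u x - v x|) + ∫ x in s, |v x - w x| := by
  have h1 : IntegrableOn (fun x => |u x - v x|) s := (hu.sub hv).abs
  have h2 : IntegrableOn (fun x => |v x - w x|) s := (hv.sub hw).abs
  have h3 : IntegrableOn (fun x => |u x - w x|) s := (hu.sub hw).abs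
  calc _ ≤ ∫ x in s, (|u x - v x| + |v x - w x|) :=
        integral_mono h3 (h1.add h2) fun x => abs_sub_le _ _ _
    _ = _ := integral_add h1 h2

lemma PolyLE.integrableOn {d n : ℕ} {P : EuclideanSpace ℝ (Fin d) → ℝ} (hP : P ∈ PolyLE d n)
    (y : EuclideanSpace ℝ (Fin d)) (t : ℝ) : IntegrableOn P (cube y t) :=
  (PolyLE.continuous hP).continuousOn.integrableOn_compact (cube_isCompact y t)

lemma cube_int_le {d : ℕ} {u : EuclideanSpace ℝ (Fin d) → ℝ} (y : EuclideanSpace ℝ (Fin d))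
    {t : ℝ} (ht : 0 ≤ t) {b : ℝ} (hu : ∀ x ∈ cube y t, |u x| ≤ b) :
    ∫ x in cube y t, |u x| ≤ b * t ^ d := by
  have := norm_setIntegral_le_of_norm_le_const (f := fun x => |u x|) (C := b)
    (cube_volume_lt y t ht) (by simpa using hu)
  rw [cube_volume_real y t ht] at this
  exact (le_abs_self _).trans this

lemma setInt_mono {d : ℕ} {s t : Set (EuclideanSpace ℝ (Fin d))}
    {u : EuclideanSpace ℝ (Fin d) → ℝ}
    (hu : IntegrableOn u t) (h : s ⊆ t) : ∫ x in s, |u x| ≤ ∫ x in t, |u x| :=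
  setIntegral_mono_set hu.abs (Eventually.of_forall fun _ => abs_nonneg _) h.eventuallyLE

lemma campanato_point (d n : ℕ) (M : ℝ) (hM1 : 1 ≤ M)
    (hM : ∀ P ∈ PolyLE d n, ∀ (y : EuclideanSpace ℝ (Fin d)) (t lam : ℝ)
      (x : EuclideanSpace ℝ (Fin d)), 0 < t → 0 ≤ lam → lam ≤ 1 →
      (∀ i, |x i - y i| ≤ lam * t) →
      |P x - P y| * t ^ d ≤ M * lam * ∫ z in cube y t, |P z| ∧
      |P x| * t ^ d ≤ M * ∫ z in cube y t, |P z|)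
    (lam th : ℝ) (hl0 : 0 < lam) (hl1 : lam < 1) (ht0 : 0 < th) (ht1 : th < 1)
    (hlt : M * lam ≤ th / 2) :
    ∃ B : ℝ, 0 ≤ B ∧ ∀ (y : EuclideanSpace ℝ (Fin d)) (l A : ℝ)
      (h : EuclideanSpace ℝ (Fin d) → ℝ), 0 < l → 0 ≤ A → IntegrableOn h (cube y l) →
      (∫ x in cube y l, |h x| ≤ A * l ^ d) →
      (∀ k : ℕ, ∃ P ∈ PolyLE d n,
        ∫ x in cube y (lam ^ k * l), |h x - P x| ≤ A * th ^ k * (lam ^ k * l) ^ d) →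
      ∃ c : ℝ, ∀ k : ℕ,
        ∫ x in cube y (lam ^ k * l), |h x - c| ≤ B * A * th ^ k * (lam ^ k * l) ^ d := by
  set L : ℝ := (lam ^ d)⁻¹ with hL
  have hL1 : 1 ≤ L := by
    rw [hL]; exact (one_le_inv₀ (by positivity)).2 (pow_le_one₀ hl0.le hl1.le)
  set B0 : ℝ := 2 * ((L + 1) * (1 + M)) / th with hB0
  have hB0th : B0 * th = 2 * ((L + 1) * (1 + M)) := by rw [hB0]; field_simp
  have hB0nn : 0 ≤ B0 := by positivity
  refine ⟨B0 + M * (L + 1) / (1 - th), by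
    have : 0 < 1 - th := by linarith
    positivity, ?_⟩
  intro y l A h hl hA hh hhA hP
  choose p hp hpA using hP
  set t : ℕ → ℝ := fun k => lam ^ k * l with ht
  have htpos : ∀ k, 0 < t k := fun k => by simp only [ht]; positivity
  have htsucc : ∀ k, t (k + 1) = lam * t k := fun k => by simp only [ht]; ring
  have hV : ∀ k, t k ^ d = L * t (k + 1) ^ d := fun k => by
    rw [htsucc k, mul_pow lam (t k) d, hL, ← mul_assoc, inv_mul_cancel₀ (by positivity), one_mul]
  have hVpos : ∀ k, 0 < t k ^ d := fun k => pow_pos (htpos k) d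
  have htle : ∀ k, t k ≤ l := fun k => by
    simp only [ht]
    exact mul_le_of_le_one_left hl.le (pow_le_one₀ hl0.le hl1.le)
  have htle' : ∀ k, t (k + 1) ≤ t k := fun k => by
    rw [htsucc]; exact mul_le_of_le_one_left (htpos k).le hl1.le
  have hhk : ∀ k, IntegrableOn h (cube y (t k)) := fun k => hh.mono_set (cube_mono y (htle k))
  have hpk : ∀ j k, IntegrableOn (p j) (cube y (t k)) := fun j k =>
    PolyLE.integrableOn (hp j) _ _
  have hck : ∀ (c : ℝ) k, IntegrableOn (fun _ => c) (cube y (t k)) := fun c k =>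
    PolyLE.integrableOn (PolyLE.const (n := n) c) _ _
  have hsub : ∀ k, cube y (t (k + 1)) ⊆ cube y (t k) := fun k => cube_mono y (htle' k)
  set c : ℕ → ℝ := fun k => p k y with hc
  -- consecutive constants
  have hcc : ∀ k, |c k - c (k + 1)| ≤ M * (L + 1) * A * th ^ k := by
    intro k
    have h1 := (hM _ (PolyLE.sub (hp k) (hp (k + 1))) y (t (k + 1)) 0 y (htpos _) le_rfl
      zero_le_one (by simp)).2
    have h2 : ∫ x in cube y (t (k + 1)), |p k x - p (k + 1) x|
        ≤ A * th ^ k * t k ^ d + A * th ^ (k + 1) * t (k + 1) ^ d := by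
      refine (tri_int (hpk k _) (hhk _) (hpk (k + 1) _)).trans (add_le_add ?_ (hpA (k + 1)))
      have h3 : ∫ x in cube y (t (k + 1)), |p k x - h x|
          ≤ ∫ x in cube y (t k), |p k x - h x| :=
        setInt_mono ((hpk k k).sub (hhk k)) (hsub k)
      simp_rw [abs_sub_comm (p k _) (h _)] at h3 ⊢
      exact h3.trans (hpA k)
    have hVk := hVpos (k + 1)
    rw [hV k] at h2
    have h4 : A * th ^ (k + 1) ≤ A * th ^ k :=
      mul_le_mul_of_nonneg_left (pow_le_pow_of_le_one ht0.le ht1.le (Nat.le_succ k)) hA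
    have h5 : |c k - c (k + 1)| * t (k + 1) ^ d ≤ (M * (L + 1) * A * th ^ k) * t (k + 1) ^ d := by
      refine h1.trans ?_
      calc _ ≤ M * (A * th ^ k * (L * t (k + 1) ^ d) + A * th ^ k * t (k + 1) ^ d) := by
            refine mul_le_mul_of_nonneg_left (h2.trans ?_) (by linarith)
            have := mul_le_mul_of_nonneg_right h4 hVk.le
            linarith
        _ = _ := by ring
    exact le_of_mul_le_mul_right h5 hVk
  -- the main induction
  have hE : ∀ k, ∫ x in cube y (t k), |h x - c k| ≤ B0 * A * th ^ k * t k ^ d := by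
    intro k
    induction k with
    | zero =>
      have h1 := (hM _ (hp 0) y (t 0) 0 y (htpos _) le_rfl zero_le_one (by simp)).2
      have h2 : ∫ x in cube y (t 0), |p 0 x| ≤ 2 * A * t 0 ^ d := by
        have h3 := tri_int (hpk 0 0) (hhk 0) (hck 0 0)
        have h4 := hpA 0
        simp_rw [abs_sub_comm (p 0 _) (h _)] at h3
        have h5 : t 0 = l := by simp [ht]
        simp only [sub_zero] at h3
        rw [h5] at h3 ⊢
        simp only [pow_zero, one_mul, mul_one] at h4
        linarith
      have h3 := tri_int (hhk 0) (hpk 0 0) (hck (c 0) 0)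
      have h6 := tri_int (hhk 0) (hck 0 0) (hck (c 0) 0)
      have h7 : ∫ x in cube y (t 0), |(0 : ℝ) - c 0| ≤ |c 0| * t 0 ^ d := by
        refine cube_int_le (u := fun _ => (0 : ℝ) - c 0) y (htpos 0).le ?_
        intro x _; simp
      have h8 : ∫ x in cube y (t 0), |h x - 0| ≤ A * t 0 ^ d := by
        have h5 : t 0 = l := by simp [ht]
        simpa [h5] using hhA
      have h9 : |c 0| * t 0 ^ d ≤ M * (2 * A * t 0 ^ d) :=
        h1.trans (mul_le_mul_of_nonneg_left h2 (by linarith))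
      have h10 : 1 + 2 * M ≤ B0 := by
        have : B0 * th ≤ B0 := mul_le_of_le_one_right hB0nn ht1.le
        nlinarith
      have h11 : (1 + 2 * M) * (A * t 0 ^ d) ≤ B0 * (A * t 0 ^ d) :=
        mul_le_mul_of_nonneg_right h10 (mul_nonneg hA (hVpos 0).le)
      rw [pow_zero, mul_one]
      linarith
    | succ k ih =>
      have hq : (fun x => p k x - c k) ∈ PolyLE d n := PolyLE.sub (hp k) (PolyLE.const _)
      have hVk := hVpos k
      have hVk1 := hVpos (k + 1)
      have h1 : ∫ x in cube y (t k), |p k x - c k| ≤ (A * th ^ k + B0 * A * th ^ k) * t k ^ d := by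
        have h2 := tri_int (hpk k k) (hhk k) (hck (c k) k)
        have h3 := hpA k
        simp_rw [abs_sub_comm (p k _) (h _)] at h2
        have h3' : ∫ x in cube y (t k), |h x - p k x| ≤ A * th ^ k * t k ^ d := h3
        linarith
      have h4 : ∀ x ∈ cube y (t (k + 1)),
          |p k x - c k| ≤ th / 2 * (A * th ^ k + B0 * A * th ^ k) := by
        intro x hx
        have h5 := (hM _ hq y (t k) lam x (htpos k) hl0.le hl1.le (by
          intro i
          have := hx i
          rw [htsucc] at this
          have h6 : 0 ≤ lam * t k := by have := htpos k; positivity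
          linarith)).1
        simp only [hc, sub_self, sub_zero] at h5
        have h7 : |p k x - c k| * t k ^ d
            ≤ (th / 2 * (A * th ^ k + B0 * A * th ^ k)) * t k ^ d := by
          refine h5.trans ?_
          have h8 : 0 ≤ ∫ x in cube y (t k), |p k x - c k| :=
            integral_nonneg fun x => abs_nonneg _
          calc _ ≤ th / 2 * ((A * th ^ k + B0 * A * th ^ k) * t k ^ d) :=
                mul_le_mul hlt h1 h8 (by positivity)
            _ = _ := by ring
        exact le_of_mul_le_mul_right h7 hVk
      have h5 := cube_int_le (u := fun x => p k x - c k) y (htpos (k + 1)).le h4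
      have h6 : ∫ x in cube y (t (k + 1)), |c k - c (k + 1)|
          ≤ (M * (L + 1) * A * th ^ k) * t (k + 1) ^ d :=
        cube_int_le (u := fun _ => c k - c (k + 1)) y (htpos (k + 1)).le fun x _ => hcc k
      have h7 : ∫ x in cube y (t (k + 1)), |h x - p k x| ≤ A * th ^ k * (L * t (k + 1) ^ d) := by
        rw [← hV k]
        exact (setInt_mono ((hhk k).sub (hpk k k)) (hsub k)).trans (hpA k)
      have h8 := tri_int (hhk (k + 1)) (hpk k (k + 1)) (hck (c (k + 1)) (k + 1))
      have h9 := tri_int (hpk k (k + 1)) (hck (c k) (k + 1)) (hck (c (k + 1)) (k + 1))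
      set W := A * th ^ k * t (k + 1) ^ d with hW
      have hW0 : 0 ≤ W := by positivity
      have h10 : B0 * A * th ^ (k + 1) * t (k + 1) ^ d = (2 * ((L + 1) * (1 + M))) * W := by
        rw [← hB0th, hW]; ring
      have h11 : (th / 2 * (A * th ^ k + B0 * A * th ^ k)) * t (k + 1) ^ d
          = (th / 2 + (L + 1) * (1 + M)) * W := by
        have : (L + 1) * (1 + M) = B0 * th / 2 := by linarith
        rw [this, hW]; ring
      have h12 : (M * (L + 1) * A * th ^ k) * t (k + 1) ^ d = M * (L + 1) * W := by
        rw [hW]; ring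
      have h13 : A * th ^ k * (L * t (k + 1) ^ d) = L * W := by rw [hW]; ring
      rw [h11] at h5
      rw [h12] at h6
      rw [h13] at h7
      rw [h10]
      nlinarith
  -- limit
  have hgeo : ∀ k, dist (c k) (c (k + 1)) ≤ (M * (L + 1) * A) * th ^ k := fun k => by
    rw [Real.dist_eq]; exact hcc k
  obtain ⟨c', hc'⟩ := cauchySeq_tendsto_of_complete (cauchySeq_of_le_geometric th _ ht1 hgeo)
  refine ⟨c', fun k => ?_⟩
  have h1 := dist_le_of_le_geometric_of_tendsto th _ ht1 hgeo hc' k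
  rw [Real.dist_eq] at h1
  have h2 := tri_int (hhk k) (hck (c k) k) (hck c' k)
  have h3 := cube_int_le (u := fun _ => c k - c') y (htpos k).le fun x _ => h1
  have h4 := hE k
  refine h2.trans ((add_le_add h4 h3).trans (le_of_eq ?_))
  simp only [ht]
  ring

/-! ### The kernel -/

lemma CZ_kernel_bound {d : ℕ} {k : ℕ∞} {Ω : EuclideanSpace ℝ (Fin d) → ℝ}
    (hΩ : IsCZDensity d k Ω) (hd : 0 < d) :
    ∃ G : ℝ, 0 ≤ G ∧ ∀ x, |Ω x / ‖x‖ ^ d| ≤ G / ‖x‖ ^ d := by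
  have hcont : ContinuousOn Ω (Metric.sphere 0 1) :=
    hΩ.smooth.continuousOn.mono fun x hx => by
      rintro rfl
      simp at hx
  obtain ⟨G, hG⟩ := (isCompact_sphere (0 : EuclideanSpace ℝ (Fin d)) 1).exists_bound_of_continuousOn
    hcont
  refine ⟨|G|, abs_nonneg _, fun x => ?_⟩
  by_cases hx : x = 0
  · simp [hx, hd.ne']
  have hx' : 0 < ‖x‖ := norm_pos_iff.2 hx
  rw [abs_div, abs_of_nonneg (a := ‖x‖ ^ d) (by positivity)]
  refine div_le_div_of_nonneg_right ?_ (by positivity)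
  rw [← hΩ.homog (‖x‖⁻¹) (by positivity) x]
  refine (hG _ ?_).trans (le_abs_self _)
  simp [norm_smul, hx'.ne']

lemma CZ_kernel_measurable {d : ℕ} {k : ℕ∞} {Ω : EuclideanSpace ℝ (Fin d) → ℝ}
    (hΩ : IsCZDensity d k Ω) : Measurable (fun x => Ω x / ‖x‖ ^ d) := by
  have h1 : Measurable Ω :=
    measurable_of_continuousOn_compl_singleton 0 hΩ.smooth.continuousOn
  exact h1.div (measurable_norm.pow_const d)

lemma annulus_measurable {d : ℕ} (y : EuclideanSpace ℝ (Fin d)) (ε ρ : ℝ) :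
    MeasurableSet {x : EuclideanSpace ℝ (Fin d) | ε < dist y x ∧ dist y x ≤ ρ} := by
  have : Measurable fun x : EuclideanSpace ℝ (Fin d) => dist y x := by fun_prop
  exact this measurableSet_Ioc

lemma CZ_annulus {d : ℕ} {k : ℕ∞} {Ω : EuclideanSpace ℝ (Fin d) → ℝ}
    (hΩ : IsCZDensity d k Ω) (y : EuclideanSpace ℝ (Fin d)) (ε ρ : ℝ) (hε : 0 < ε) :
    ∫ x in {x | ε < dist y x ∧ dist y x ≤ ρ}, Ω (y - x) / ‖y - x‖ ^ d = 0 := by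
  have hms : MeasurableSet {x : EuclideanSpace ℝ (Fin d) | ε < dist y x ∧ dist y x ≤ ρ} :=
    annulus_measurable y ε ρ
  rw [← integral_indicator hms]
  let F : EuclideanSpace ℝ (Fin d) → ℝ := fun z =>
    Ω z * (Set.Ioc ε ρ).indicator (fun r => (r ^ d)⁻¹) ‖z‖
  have h1 : ∀ x, ({x | ε < dist y x ∧ dist y x ≤ ρ} : Set (EuclideanSpace ℝ (Fin d))).indicator
      (fun x => Ω (y - x) / ‖y - x‖ ^ d) x = F (y - x) := by
    intro x
    simp only [F, indicator, mem_ofPred_eq, dist_eq_norm, mem_Ioc]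
    split_ifs <;> simp [div_eq_mul_inv]
  rw [integral_congr_ae (Eventually.of_forall h1), integral_sub_left_eq_self F volume y]
  have h2 : ∫ z, F z = ∫ z in ({0}ᶜ : Set (EuclideanSpace ℝ (Fin d))), F z := by
    symm
    refine setIntegral_eq_integral_of_forall_compl_eq_zero fun z hz => ?_
    have : z = 0 := by simpa using hz
    simp [F, this, indicator, hε.not_gt]
  rw [h2, ← integral_subtype_comap (measurableSet_singleton _).compl]
  have hmp := (volume : Measure (EuclideanSpace ℝ (Fin d))).measurePreserving_homeomorphUnitSphereProd
  have h3 := hmp.integral_comp (Homeomorph.measurableEmbedding _)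
    (fun q : Metric.sphere (0 : EuclideanSpace ℝ (Fin d)) 1 × Set.Ioi (0 : ℝ) =>
      Ω q.1 * (Set.Ioc ε ρ).indicator (fun r => (r ^ d)⁻¹) (q.2 : ℝ))
  have h4 := integral_prod_mul (μ := (volume : Measure (EuclideanSpace ℝ (Fin d))).toSphere)
    (ν := Measure.volumeIoiPow (Module.finrank ℝ (EuclideanSpace ℝ (Fin d)) - 1))
    (fun q => Ω q) (fun r => (Set.Ioc ε ρ).indicator (fun r => (r ^ d)⁻¹) (r : ℝ))
  rw [hΩ.meanZero, zero_mul] at h4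
  rw [h4] at h3
  rw [← h3]
  refine integral_congr_ae (Eventually.of_forall fun z => ?_)
  have hz : 0 < ‖z.1‖ := norm_pos_iff.2 z.2
  simp only [F, homeomorphUnitSphereProd_apply_fst_coe, homeomorphUnitSphereProd_apply_snd_coe]
  rw [hΩ.homog _ (by positivity)]

lemma kernel_int {d : ℕ} (hd : 0 < d) {K : EuclideanSpace ℝ (Fin d) → ℝ} (hKm : Measurable K)
    {G : ℝ} (hG0 : 0 ≤ G) (hKG : ∀ x, |K x| ≤ G / ‖x‖ ^ d)
    {lam th : ℝ} (hl0 : 0 < lam) (hl1 : lam < 1) (ht0 : 0 < th) (ht1 : th < 1)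
    (y : EuclideanSpace ℝ (Fin d)) {l b : ℝ} (hl : 0 < l) (hb : 0 ≤ b)
    {u : EuclideanSpace ℝ (Fin d) → ℝ} (hu : IntegrableOn u (cube y l))
    (hub : ∀ k : ℕ, ∫ x in cube y (lam ^ k * l), |u x| ≤ b * th ^ k * (lam ^ k * l) ^ d) :
    IntegrableOn (fun x => u x * K (y - x)) (cube y l) ∧
      ∫ x in cube y l, |u x * K (y - x)| ≤ G * 2 ^ d * (lam ^ d)⁻¹ * b * (1 - th)⁻¹ := by
  set t : ℕ → ℝ := fun k => lam ^ k * l with ht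
  have htpos : ∀ k, 0 < t k := fun k => by simp only [ht]; positivity
  have htsucc : ∀ k, t (k + 1) = lam * t k := fun k => by simp only [ht]; ring
  have htle : ∀ k, t k ≤ l := fun k => by
    simp only [ht]
    exact mul_le_of_le_one_left hl.le (pow_le_one₀ hl0.le hl1.le)
  have huk : ∀ k, IntegrableOn u (cube y (t k)) := fun k => hu.mono_set (cube_mono y (htle k))
  set H := G * 2 ^ d * (lam ^ d)⁻¹ * b with hH
  have hH0 : 0 ≤ H := by positivity
  have hmeas : AEStronglyMeasurable (fun x => u x * K (y - x)) (volume.restrict (cube y l)) :=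
    hu.aestronglyMeasurable.mul (hKm.comp (by fun_prop)).aestronglyMeasurable
  -- one shell
  have hshell : ∀ k, ∫⁻ x in cube y (t k) \ cube y (t (k + 1)), ENNReal.ofReal |u x * K (y - x)|
      ≤ ENNReal.ofReal (H * th ^ k) := by
    intro k
    set J := G * 2 ^ d / t (k + 1) ^ d with hJ
    have hJ0 : 0 ≤ J := by have := htpos (k + 1); positivity
    have hpt : ∀ x ∈ cube y (t k) \ cube y (t (k + 1)),
        ENNReal.ofReal |u x * K (y - x)| ≤ ENNReal.ofReal (J * |u x|) := by
      intro x hx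
      refine ENNReal.ofReal_le_ofReal ?_
      rw [abs_mul, mul_comm]
      refine mul_le_mul_of_nonneg_right ((hKG _).trans ?_) (abs_nonneg _)
      have h1 : t (k + 1) / 2 ≤ ‖y - x‖ := by
        have h2 := hx.2
        simp only [cube, mem_ofPred_eq, not_forall, not_le] at h2
        obtain ⟨i, hi⟩ := h2
        have h3 := PiLp.norm_apply_le (y - x) i
        rw [PiLp.sub_apply, Real.norm_eq_abs, abs_sub_comm] at h3
        linarith
      have h4 := htpos (k + 1)
      have h5 : (t (k + 1) / 2) ^ d ≤ ‖y - x‖ ^ d := pow_le_pow_left₀ (by positivity) h1 d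
      calc G / ‖y - x‖ ^ d ≤ G / (t (k + 1) / 2) ^ d :=
            div_le_div_of_nonneg_left hG0 (by positivity) h5
        _ = J := by rw [hJ, div_pow]; field_simp
    calc _ ≤ ∫⁻ x in cube y (t k) \ cube y (t (k + 1)), ENNReal.ofReal (J * |u x|) :=
          setLIntegral_mono' ((cube_measurable _ _).diff (cube_measurable _ _)) hpt
      _ ≤ ∫⁻ x in cube y (t k), ENNReal.ofReal (J * |u x|) := lintegral_mono_set sdiff_subset
      _ = ENNReal.ofReal (∫ x in cube y (t k), J * |u x|) := by
          rw [ofReal_integral_eq_lintegral_ofReal]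
          · exact (huk k).abs.const_mul J
          · exact Eventually.of_forall fun x => by positivity
      _ ≤ _ := by
          refine ENNReal.ofReal_le_ofReal ?_
          rw [integral_const_mul]
          refine (mul_le_mul_of_nonneg_left (hub k) hJ0).trans (le_of_eq ?_)
          have h4 := htpos k
          change J * (b * th ^ k * t k ^ d) = _
          rw [hJ, hH, htsucc, mul_pow lam (t k) d]
          field_simp
  have hcover : cube y l ⊆ {y} ∪ ⋃ k, (cube y (t k) \ cube y (t (k + 1))) := by
    intro x hx
    by_cases hxy : x = y
    · left; exact hxy
    right
    have hex : ∃ k, x ∉ cube y (t k) := by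
      by_contra! hcon
      apply hxy
      ext i
      have htend : Tendsto t atTop (𝓝 0) := by
        have := (tendsto_pow_atTop_nhds_zero_of_lt_one hl0.le hl1).mul_const l
        simpa [ht] using this
      have h1 : |x i - y i| ≤ 0 / 2 :=
        ge_of_tendsto' (htend.div_const 2) fun k => hcon k i
      have h2 : x i - y i = 0 := abs_eq_zero.1 (le_antisymm (by simpa using h1) (abs_nonneg _))
      linarith
    classical
    have hk := Nat.find_spec hex
    have hmin := fun m (hm : m < Nat.find hex) => Nat.find_min hex hm
    rcases hkk : Nat.find hex with _ | m
    · rw [hkk] at hk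
      exact absurd (by simpa [ht] using hx) hk
    · rw [hkk] at hk
      refine mem_iUnion.2 ⟨m, ?_, hk⟩
      have := hmin m (by omega)
      simpa using this
  have hlint : ∫⁻ x in cube y l, ENNReal.ofReal |u x * K (y - x)|
      ≤ ENNReal.ofReal (H * (1 - th)⁻¹) := by
    calc _ ≤ ∫⁻ x in {y} ∪ ⋃ k, (cube y (t k) \ cube y (t (k + 1))),
            ENNReal.ofReal |u x * K (y - x)| := lintegral_mono_set hcover
      _ ≤ (∫⁻ x in {y}, ENNReal.ofReal |u x * K (y - x)|) +
          ∫⁻ x in ⋃ k, (cube y (t k) \ cube y (t (k + 1))),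
            ENNReal.ofReal |u x * K (y - x)| := lintegral_union_le _ _ _
      _ ≤ 0 + ∑' k, ENNReal.ofReal (H * th ^ k) := by
          refine add_le_add ?_ ?_
          · have hK0 : K 0 = 0 := by
              have := hKG 0
              rw [norm_zero, zero_pow hd.ne', div_zero] at this
              exact abs_eq_zero.1 (le_antisymm this (abs_nonneg _))
            rw [lintegral_singleton]
            simp [hK0]
          · exact (lintegral_iUnion_le _ _).trans (ENNReal.tsum_le_tsum hshell)
      _ = _ := by
          rw [zero_add, ← ENNReal.ofReal_tsum_of_nonneg (fun k => by positivity)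
            ((summable_geometric_of_lt_one ht0.le ht1).mul_left H), tsum_mul_left,
            tsum_geometric_of_lt_one ht0.le ht1]
  have hint : IntegrableOn (fun x => u x * K (y - x)) (cube y l) := by
    refine ⟨hmeas, ?_⟩
    rw [hasFiniteIntegral_iff_norm]
    exact hlint.trans_lt ENNReal.ofReal_lt_top
  refine ⟨hint, ?_⟩
  have h1 : ENNReal.ofReal (∫ x in cube y l, |u x * K (y - x)|)
      ≤ ENNReal.ofReal (H * (1 - th)⁻¹) := by
    rw [ofReal_integral_eq_lintegral_ofReal hint.abs (Eventually.of_forall fun x => abs_nonneg _)]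
    exact hlint
  have h2 : 0 < 1 - th := by linarith
  exact (ENNReal.ofReal_le_ofReal_iff (by positivity)).1 h1

lemma pv_point {d : ℕ} (hd : 0 < d) {k : ℕ∞} {Ω K : EuclideanSpace ℝ (Fin d) → ℝ}
    (hΩ : IsCZDensity d k Ω) (hK : K = fun x => Ω x / ‖x‖ ^ d)
    {G : ℝ} (hG0 : 0 ≤ G) (hKG : ∀ x, |K x| ≤ G / ‖x‖ ^ d)
    {x₀ y : EuclideanSpace ℝ (Fin d)} {l A b c : ℝ} (hl : 0 < l)
    (hy : y ∈ cube x₀ l)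
    {h : EuclideanSpace ℝ (Fin d) → ℝ} (hh : IntegrableOn h (cube x₀ (2 * l)))
    (hhA : ∫ x in cube x₀ (2 * l), |h x| ≤ A * l ^ d)
    (hvi : IntegrableOn (fun x => (h x - c) * K (y - x)) (cube y l))
    (hvb : ∫ x in cube y l, |(h x - c) * K (y - x)| ≤ b) :
    ∃ g : ℝ, Tendsto (fun ε : ℝ => ∫ x in {x ∈ cube x₀ (2 * l) | ε < dist y x}, h x * K (y - x))
      (𝓝[>] (0 : ℝ)) (𝓝 g) ∧ |g| ≤ G * 2 ^ d * A + b := by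
  have hKm : Measurable K := by rw [hK]; exact CZ_kernel_measurable hΩ
  have hK0 : K 0 = 0 := by
    have := hKG 0
    rw [norm_zero, zero_pow hd.ne', div_zero] at this
    exact abs_eq_zero.1 (le_antisymm this (abs_nonneg _))
  have hdm : Measurable fun x : EuclideanSpace ℝ (Fin d) => dist y x := by fun_prop
  have hfar_m : ∀ ε : ℝ, MeasurableSet {x ∈ cube x₀ (2 * l) | ε < dist y x} := fun ε =>
    (cube_measurable _ _).inter (hdm measurableSet_Ioi)
  have hKb : ∀ ε : ℝ, 0 < ε → ∀ x ∈ {x ∈ cube x₀ (2 * l) | ε < dist y x},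
      |K (y - x)| ≤ G / ε ^ d := by
    intro ε hε x hx
    refine (hKG _).trans (div_le_div_of_nonneg_left hG0 (by positivity) ?_)
    rw [← dist_eq_norm]
    exact pow_le_pow_left₀ hε.le hx.2.le d
  have hfar_i : ∀ ε : ℝ, 0 < ε →
      IntegrableOn (fun x => h x * K (y - x)) {x ∈ cube x₀ (2 * l) | ε < dist y x} := by
    intro ε hε
    have h1 : IntegrableOn h {x ∈ cube x₀ (2 * l) | ε < dist y x} := hh.mono_set fun x hx => hx.1
    refine Integrable.mul_bdd (c := G / ε ^ d) h1
      (hKm.comp (by fun_prop)).aestronglyMeasurable ?_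
    filter_upwards [ae_restrict_mem (hfar_m ε)] with x hx
    exact hKb ε hε x hx
  set v : EuclideanSpace ℝ (Fin d) → ℝ := fun x => (h x - c) * K (y - x) with hv
  have hρ : 0 < l / 2 := by positivity
  have hball : ∀ x, dist y x ≤ l / 2 → x ∈ cube y l := by
    intro x hx i
    have h3 := PiLp.norm_apply_le (y - x) i
    rw [PiLp.sub_apply, Real.norm_eq_abs, abs_sub_comm, ← dist_eq_norm] at h3
    linarith
  have hsub := cube_center_subset hy
  set S : Set (EuclideanSpace ℝ (Fin d)) := {x | dist y x ≤ l / 2} with hS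
  have hSm : MeasurableSet S := hdm measurableSet_Iic
  have hvS : IntegrableOn v S := hvi.mono_set hball
  set g1 := ∫ x in {x ∈ cube x₀ (2 * l) | l / 2 < dist y x}, h x * K (y - x) with hg1
  set g2 := ∫ x in S, v x with hg2
  -- limit of the annular part
  have hlim : Tendsto (fun ε : ℝ => ∫ x in {x | ε < dist y x ∧ dist y x ≤ l / 2}, v x)
      (𝓝[>] (0 : ℝ)) (𝓝 g2) := by
    simp_rw [← integral_indicator (annulus_measurable y _ (l / 2))]
    rw [hg2, ← integral_indicator hSm]
    refine tendsto_integral_filter_of_dominated_convergence (S.indicator fun x => |v x|) ?_ ?_ ?_ ?_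
    · refine Eventually.of_forall fun ε => ?_
      rw [aestronglyMeasurable_indicator_iff (annulus_measurable y _ (l / 2))]
      exact hvS.aestronglyMeasurable.mono_measure
        (Measure.restrict_mono (fun x hx => hx.2) le_rfl)
    · refine Eventually.of_forall fun ε => Eventually.of_forall fun x => ?_
      by_cases h1 : x ∈ S
      · rw [indicator_of_mem h1]
        exact norm_indicator_le_norm_self _ _
      · have h2 : x ∉ {x | ε < dist y x ∧ dist y x ≤ l / 2} := fun h => h1 h.2
        rw [indicator_of_notMem h1, indicator_of_notMem h2, norm_zero]
    · rw [integrable_indicator_iff hSm]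
      exact hvS.abs
    · refine Eventually.of_forall fun x => ?_
      by_cases hxy : x = y
      · have hv0 : v y = 0 := by simp [hv, hK0]
        subst hxy
        simp [indicator, hv0]
      · have hpos : 0 < dist y x := dist_pos.2 (Ne.symm hxy)
        refine tendsto_const_nhds.congr' ?_
        filter_upwards [nhdsWithin_le_nhds (Iio_mem_nhds hpos)] with ε hε
        have hε' : ε < dist y x := hε
        by_cases h1 : x ∈ S
        · rw [indicator_of_mem h1, indicator_of_mem]
          exact ⟨hε', h1⟩
        · rw [indicator_of_notMem h1, indicator_of_notMem]
          exact fun h => h1 h.2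
  refine ⟨g1 + g2, ?_, ?_⟩
  · refine (hlim.const_add g1).congr' ?_
    filter_upwards [Ioo_mem_nhdsGT hρ] with ε hε
    have hun : {x ∈ cube x₀ (2 * l) | ε < dist y x} = {x ∈ cube x₀ (2 * l) | l / 2 < dist y x} ∪
        {x | ε < dist y x ∧ dist y x ≤ l / 2} := by
      ext x
      simp only [mem_ofPred_eq, mem_union]
      constructor
      · rintro ⟨h1, h2⟩
        rcases lt_or_ge (l / 2) (dist y x) with h3 | h3
        · exact Or.inl ⟨h1, h3⟩
        · exact Or.inr ⟨h2, h3⟩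
      · rintro (⟨h1, h2⟩ | ⟨h1, h2⟩)
        · exact ⟨h1, hε.2.trans h2⟩
        · exact ⟨hsub (hball x h2), h1⟩
    have hann_sub : {x | ε < dist y x ∧ dist y x ≤ l / 2} ⊆ {x ∈ cube x₀ (2 * l) | ε < dist y x} := by
      rw [hun]; exact subset_union_right
    have hi1 := (hfar_i ε hε.1).mono_set hann_sub
    have hi2 : IntegrableOn v {x | ε < dist y x ∧ dist y x ≤ l / 2} :=
      hvS.mono_set fun x hx => hx.2
    have hdisj : Disjoint {x ∈ cube x₀ (2 * l) | l / 2 < dist y x}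
        {x | ε < dist y x ∧ dist y x ≤ l / 2} := by
      rw [Set.disjoint_left]
      rintro x ⟨_, h1⟩ ⟨_, h2⟩
      exact absurd h1 (not_lt.2 h2)
    rw [hun, setIntegral_union hdisj (annulus_measurable _ _ _) (hfar_i _ hρ) hi1, ← hg1]
    congr 1
    have h5 : ∫ x in {x | ε < dist y x ∧ dist y x ≤ l / 2}, (h x * K (y - x) - v x)
        = ∫ x in {x | ε < dist y x ∧ dist y x ≤ l / 2}, c * K (y - x) := by
      refine integral_congr_ae (Eventually.of_forall fun x => ?_)
      simp only [hv]; ring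
    rw [integral_sub hi1 hi2, integral_const_mul] at h5
    have h6 : ∫ x in {x | ε < dist y x ∧ dist y x ≤ l / 2}, K (y - x) = 0 := by
      rw [hK]; exact CZ_annulus hΩ y ε (l / 2) hε.1
    rw [h6, mul_zero] at h5
    linarith
  · refine (abs_add_le _ _).trans (add_le_add ?_ ?_)
    · have hfm := hfar_m (l / 2)
      have hhf : IntegrableOn h {x ∈ cube x₀ (2 * l) | l / 2 < dist y x} :=
        hh.mono_set fun x hx => hx.1
      calc |g1| ≤ ∫ x in {x ∈ cube x₀ (2 * l) | l / 2 < dist y x}, |h x * K (y - x)| :=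
            abs_integral_le_integral_abs
        _ ≤ ∫ x in {x ∈ cube x₀ (2 * l) | l / 2 < dist y x}, G / (l / 2) ^ d * |h x| := by
            refine setIntegral_mono_on (hfar_i _ hρ).abs (hhf.abs.const_mul _) hfm fun x hx => ?_
            rw [abs_mul, mul_comm]
            exact mul_le_mul_of_nonneg_right (hKb _ hρ x hx) (abs_nonneg _)
        _ = G / (l / 2) ^ d * ∫ x in {x ∈ cube x₀ (2 * l) | l / 2 < dist y x}, |h x| :=
            integral_const_mul _ _
        _ ≤ G / (l / 2) ^ d * (A * l ^ d) :=
            mul_le_mul_of_nonneg_left ((setInt_mono hh fun x hx => hx.1).trans hhA) (by positivity)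
        _ = _ := by rw [div_pow]; field_simp
    · calc |g2| ≤ ∫ x in S, |v x| := abs_integral_le_integral_abs
        _ ≤ ∫ x in cube y l, |v x| := setInt_mono hvi hball
        _ ≤ b := hvb

/-! ### Approximating polynomials from the seminorm -/

lemma zyg_approx {d n : ℕ} {ω : ℝ → ℝ} {D : Set (EuclideanSpace ℝ (Fin d))}
    {f : EuclideanSpace ℝ (Fin d) → ℝ} (hf : IntegrableOn f D) (hS : zygSeminorm ω n D f < ⊤)
    {y : EuclideanSpace ℝ (Fin d)} {t δ : ℝ} (ht : 0 < t) (hω : 0 ≤ ω t) (hsub : cube y t ⊆ D)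
    (hδ : 0 < δ) :
    ∃ P ∈ PolyLE d n, ∫ x in cube y t, |f x - P x|
      ≤ ω t * t ^ d * ((zygSeminorm ω n D f).toReal + δ) := by
  have h1 : (⨅ (P : EuclideanSpace ℝ (Fin d) → ℝ) (_ : P ∈ PolyLE d n),
      (ENNReal.ofReal (ω t * t ^ d))⁻¹ * ∫⁻ x in cube y t, ENNReal.ofReal |f x - P x|)
      ≤ zygSeminorm ω n D f := by
    unfold zygSeminorm
    exact le_iSup₂_of_le y t (le_iSup₂_of_le ht hsub le_rfl)
  set S := (zygSeminorm ω n D f).toReal with hSdef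
  have hS0 : 0 ≤ S := ENNReal.toReal_nonneg
  have h2 : zygSeminorm ω n D f < ENNReal.ofReal (S + δ) := by
    rw [← ENNReal.ofReal_toReal hS.ne]
    exact (ENNReal.ofReal_lt_ofReal_iff (by linarith)).2 (by linarith)
  have h3 := h1.trans_lt h2
  simp only [iInf_lt_iff] at h3
  obtain ⟨P, hP, h4⟩ := h3
  refine ⟨P, hP, ?_⟩
  have hi : IntegrableOn (fun x => |f x - P x|) (cube y t) :=
    ((hf.mono_set hsub).sub (PolyLE.integrableOn hP y t)).abs
  rw [mul_comm, ← div_eq_mul_inv] at h4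
  have h5 := (ENNReal.div_le_iff_le_mul (Or.inr ENNReal.ofReal_ne_top)
    (Or.inl ENNReal.ofReal_ne_top)).1 h4.le
  rw [← ofReal_integral_eq_lintegral_ofReal hi (Eventually.of_forall fun x => abs_nonneg _),
    ← ENNReal.ofReal_mul (by linarith)] at h5
  rw [mul_comm]
  exact (ENNReal.ofReal_le_ofReal_iff (by positivity)).1 h5

lemma nearBest_real {d n : ℕ} {ω : ℝ → ℝ} {D : Set (EuclideanSpace ℝ (Fin d))}
    {f : EuclideanSpace ℝ (Fin d) → ℝ} (hf : IntegrableOn f D) (hS : zygSeminorm ω n D f < ⊤)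
    {x₀ : EuclideanSpace ℝ (Fin d)} {l C₀ : ℝ} (hl : 0 < l) (hω : 0 ≤ ω l) (hC₀ : 0 < C₀)
    (hsub : cube x₀ l ⊆ D) {P : EuclideanSpace ℝ (Fin d) → ℝ}
    (hP : IsNearBestApprox ω n D f C₀ x₀ l P) :
    ∫ x in cube x₀ l, |f x - P x| ≤ C₀ * ω l * (zygSeminorm ω n D f).toReal * l ^ d := by
  obtain ⟨hP, h4⟩ := hP
  have hi : IntegrableOn (fun x => |f x - P x|) (cube x₀ l) :=
    ((hf.mono_set hsub).sub (PolyLE.integrableOn hP x₀ l)).abs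
  rw [mul_comm, ← div_eq_mul_inv] at h4
  have hld : ENNReal.ofReal (l ^ d) ≠ 0 := by
    rw [ENNReal.ofReal_ne_zero_iff]; positivity
  have h5 := (ENNReal.div_le_iff_le_mul (Or.inl hld)
    (Or.inl ENNReal.ofReal_ne_top)).1 h4
  rw [← ofReal_integral_eq_lintegral_ofReal hi (Eventually.of_forall fun x => abs_nonneg _),
    ← ENNReal.ofReal_toReal hS.ne,
    ← ENNReal.ofReal_mul (by positivity), ← ENNReal.ofReal_mul (by positivity)] at h5
  exact (ENNReal.ofReal_le_ofReal_iff (by positivity)).1 h5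

/-- pointwise existence and bound of the principal value -/
lemma local_pointwise {d n : ℕ} (hd : 0 < d) (ω : ℝ → ℝ) (hω : IsModulusOfOrder ω n)
    (D : Set (EuclideanSpace ℝ (Fin d)))
    (Ω K : EuclideanSpace ℝ (Fin d) → ℝ)
    (hΩ : IsCZDensity d ((n : ℕ∞) + 1) Ω)
    (hK : K = fun x => Ω x / ‖x‖ ^ d)
    (C₀ : ℝ) (hC₀ : 0 < C₀) :
    ∃ C : ℝ, 0 ≤ C ∧
      ∀ f : EuclideanSpace ℝ (Fin d) → ℝ, IntegrableOn f D → zygSeminorm ω n D f < ⊤ →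
        ∀ (x₀ : EuclideanSpace ℝ (Fin d)) (l : ℝ), 0 < l → cube x₀ (2 * l) ⊆ D →
          ∀ P : EuclideanSpace ℝ (Fin d) → ℝ, IsNearBestApprox ω n D f C₀ x₀ l P →
            ∀ y ∈ cube x₀ l, ∀ δ : ℝ, 0 < δ → ∃ g : ℝ,
              Tendsto (fun ε : ℝ => ∫ x in {x ∈ cube x₀ (2 * l) | ε < dist y x},
                      (f x - P x) * K (y - x)) (𝓝[>] (0 : ℝ)) (𝓝 g) ∧
              |g| ≤ C * ω l * ((zygSeminorm ω n D f).toReal + δ) := by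
  obtain ⟨M, hM1, hM⟩ := poly_bound d n
  obtain ⟨⟨q, -, -, Cq, hCq, hq⟩, ⟨r, hr1, -, Cr, hCr, hr⟩⟩ := hω.conds
  have hr0 : 0 < r := by
    have : (1 : ℝ) ≤ n := by exact_mod_cast hω.npos
    linarith
  have hMpos : 0 < M := by linarith
  set lam : ℝ := 1 / (4 * M ^ 2) with hlam
  have hl0 : 0 < lam := by positivity
  have hl1 : lam < 1 := by
    rw [hlam, div_lt_one (by positivity)]
    nlinarith
  set th : ℝ := max (lam ^ r) (1 / (2 * M)) with hth
  have ht0 : 0 < th := lt_max_of_lt_right (by positivity)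
  have ht1 : th < 1 := by
    refine max_lt (Real.rpow_lt_one hl0.le hl1 hr0) ?_
    rw [div_lt_one (by positivity)]
    linarith
  have hlt : M * lam ≤ th / 2 := by
    have h1 : 1 / (2 * M) ≤ th := le_max_right _ _
    have h2 : M * lam = 1 / (2 * M) / 2 := by rw [hlam]; field_simp; norm_num
    linarith
  obtain ⟨B, hB0, hB⟩ := campanato_point d n M hM1 hM lam th hl0 hl1 ht0 ht1 hlt
  obtain ⟨G, hG0, hG⟩ := CZ_kernel_bound hΩ hd
  have hKG : ∀ x, |K x| ≤ G / ‖x‖ ^ d := by rw [hK]; exact hG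
  have hKm : Measurable K := by rw [hK]; exact CZ_kernel_measurable hΩ
  set C2 : ℝ := Cq * 2 ^ q with hC2
  have hC2pos : 0 < C2 := by positivity
  set C4 : ℝ := C2 * 2 ^ d + M * (C2 * 2 ^ d + C₀) * 2 ^ d with hC4
  have hC4pos : 0 < C4 := by positivity
  set C3 : ℝ := (1 + Cr) + C4 with hC3
  have hC3pos : 0 < C3 := by positivity
  have hth' : 0 < 1 - th := by linarith
  refine ⟨(G * 2 ^ d + G * 2 ^ d * (lam ^ d)⁻¹ * B * (1 - th)⁻¹) * C3, by positivity, ?_⟩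
  intro f hf hS x₀ l hl hsub P hP y hy δ hδ
  set s := (zygSeminorm ω n D f).toReal + δ with hs
  have hs0 : 0 < s := by have : 0 ≤ (zygSeminorm ω n D f).toReal := ENNReal.toReal_nonneg; linarith
  have hωl : 0 ≤ ω l := hω.nonneg l hl.le
  have hω2 : ω (2 * l) ≤ C2 * ω l := hq 2 l (by norm_num) hl
  have hωk : ∀ k : ℕ, ω (lam ^ k * l) ≤ (1 + Cr) * th ^ k * ω l := by
    intro k
    rcases Nat.eq_zero_or_pos k with rfl | hk
    · simp only [pow_zero, one_mul, mul_one]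
      nlinarith
    · have h1 := hr (lam ^ k) l (by positivity) (pow_lt_one₀ hl0.le hl1 hk.ne') hl
      have h2 : (lam ^ k) ^ r = (lam ^ r) ^ k := by
        rw [← Real.rpow_natCast, ← Real.rpow_natCast, ← Real.rpow_mul hl0.le,
          ← Real.rpow_mul hl0.le, mul_comm]
      rw [h2] at h1
      refine h1.trans (mul_le_mul_of_nonneg_right ?_ hωl)
      have h3 : (lam ^ r) ^ k ≤ th ^ k :=
        pow_le_pow_left₀ (Real.rpow_nonneg hl0.le r) (le_max_left _ _) k
      exact mul_le_mul (by linarith) h3 (by positivity) (by positivity)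
  have hsubQ : cube x₀ l ⊆ cube x₀ (2 * l) := cube_mono x₀ (by linarith)
  have hyQ := cube_center_subset hy
  set h : EuclideanSpace ℝ (Fin d) → ℝ := fun x => f x - P x with hh
  have hfi : IntegrableOn f (cube x₀ (2 * l)) := hf.mono_set hsub
  have hPi : IntegrableOn P (cube x₀ (2 * l)) := PolyLE.integrableOn hP.1 _ _
  have hhi : IntegrableOn h (cube x₀ (2 * l)) := hfi.sub hPi
  set A := C3 * ω l * s with hA
  have hA0 : 0 ≤ A := by positivity
  have hW0 : 0 ≤ ω l * s := by positivity
  -- the L1 bound on the double cube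
  have hhA : ∫ x in cube x₀ (2 * l), |h x| ≤ A * l ^ d := by
    obtain ⟨P', hP', hP'b⟩ := zyg_approx (n := n) hf hS (y := x₀) (t := 2 * l) (δ := δ)
      (by linarith) (hω.nonneg _ (by linarith)) hsub hδ
    have hP'i : IntegrableOn P' (cube x₀ (2 * l)) := PolyLE.integrableOn hP' _ _
    have h1 : ∫ x in cube x₀ (2 * l), |f x - P' x| ≤ C2 * 2 ^ d * (ω l * s) * l ^ d := by
      refine hP'b.trans ?_
      rw [mul_pow]
      calc _ ≤ C2 * ω l * (2 ^ d * l ^ d) * s := by gcongr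
        _ = _ := by ring
    have h2 := nearBest_real hf hS hl hωl hC₀ (hsubQ.trans hsub) hP
    have h2' : ∫ x in cube x₀ l, |f x - P x| ≤ C₀ * (ω l * s) * l ^ d := by
      refine h2.trans ?_
      rw [mul_assoc C₀]
      gcongr
      linarith
    have h3 := tri_int (hP'i.mono_set hsubQ) (hfi.mono_set hsubQ) (hPi.mono_set hsubQ)
    have h4 : ∫ x in cube x₀ l, |P' x - f x| ≤ C2 * 2 ^ d * (ω l * s) * l ^ d := by
      simp_rw [abs_sub_comm (P' _) (f _)]
      exact (setInt_mono (hfi.sub hP'i) hsubQ).trans h1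
    have h5 : ∀ x ∈ cube x₀ (2 * l), |P' x - P x| ≤ M * (C2 * 2 ^ d + C₀) * (ω l * s) := by
      intro x hx
      have h6 := (hM _ (PolyLE.sub hP' hP.1) x₀ l 1 x hl zero_le_one le_rfl (fun i => by
        have := hx i
        linarith)).2
      refine le_of_mul_le_mul_right (h6.trans ?_) (show 0 < l ^ d by positivity)
      calc _ ≤ M * (C2 * 2 ^ d * (ω l * s) * l ^ d + C₀ * (ω l * s) * l ^ d) :=
            mul_le_mul_of_nonneg_left (by linarith) hMpos.le
        _ = _ := by ring
    have h6 := cube_int_le (u := fun x => P' x - P x) x₀ (t := 2 * l) (by linarith) h5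
    have h7 := tri_int hfi hP'i hPi
    have h8 : M * (C2 * 2 ^ d + C₀) * (ω l * s) * (2 * l) ^ d
        = M * (C2 * 2 ^ d + C₀) * 2 ^ d * (ω l * s) * l ^ d := by rw [mul_pow]; ring
    have h9 : C4 * (ω l * s) * l ^ d ≤ A * l ^ d := by
      rw [hA, mul_assoc C3]
      gcongr
      rw [hC3]; linarith
    have h10 : C4 * (ω l * s) * l ^ d = C2 * 2 ^ d * (ω l * s) * l ^ d
        + M * (C2 * 2 ^ d + C₀) * 2 ^ d * (ω l * s) * l ^ d := by rw [hC4]; ring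
    linarith
  have hhy : IntegrableOn h (cube y l) := hhi.mono_set hyQ
  obtain ⟨c, hc⟩ := hB y l A h hl hA0 hhy ((setInt_mono hhi hyQ).trans hhA) (by
    intro k
    have hk1 : lam ^ k * l ≤ l := mul_le_of_le_one_left hl.le (pow_le_one₀ hl0.le hl1.le)
    have hkpos : 0 < lam ^ k * l := by positivity
    obtain ⟨R, hR, hRb⟩ := zyg_approx (n := n) hf hS (y := y) (t := lam ^ k * l) (δ := δ)
      hkpos (hω.nonneg _ hkpos.le) (((cube_mono y hk1).trans hyQ).trans hsub) hδ
    refine ⟨fun x => R x - P x, PolyLE.sub hR hP.1, ?_⟩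
    simp only [hh, sub_sub_sub_cancel_right]
    refine hRb.trans ?_
    calc ω (lam ^ k * l) * (lam ^ k * l) ^ d * s
        ≤ C3 * th ^ k * ω l * (lam ^ k * l) ^ d * s := by
          gcongr
          refine (hωk k).trans ?_
          gcongr
          rw [hC3]; linarith
      _ = _ := by rw [hA]; ring)
  have hker := kernel_int hd hKm hG0 hKG hl0 hl1 ht0 ht1 y hl (b := B * A) (by positivity)
    (u := fun x => h x - c) (hhy.sub (PolyLE.integrableOn (PolyLE.const (n := n) c) _ _)) hc
  obtain ⟨g, hg, hgb⟩ := pv_point hd hΩ hK hG0 hKG hl hy hhi hhA hker.1 hker.2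
  refine ⟨g, hg, hgb.trans (le_of_eq ?_)⟩
  rw [hA]; ring

/-- **The local part.** For `f₂ = (f - P_Q) χ_{2Q}`, the principal value `T f₂` exists
a.e. on `Q` and its average over `Q` is at most `C ω(ℓ) ‖f‖`. -/
theorem statement_18 {d n : ℕ} (ω : ℝ → ℝ) (hω : IsModulusOfOrder ω n)
    (D : Set (EuclideanSpace ℝ (Fin d))) (hD : IsLipschitzDomain D)
    (Ω K : EuclideanSpace ℝ (Fin d) → ℝ)
    (hΩ : IsCZDensity d ((n : ℕ∞) + 1) Ω)
    (hK : K = fun x => Ω x / ‖x‖ ^ d)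
    (C₀ : ℝ) (hC₀ : 0 < C₀) :
    ∃ C : ℝ, 0 < C ∧
      ∀ f : EuclideanSpace ℝ (Fin d) → ℝ,
        LocallyIntegrableOn f D → IntegrableOn f D → zygSeminorm ω n D f < ⊤ →
        ∀ (x₀ : EuclideanSpace ℝ (Fin d)) (l : ℝ), 0 < l → cube x₀ (2 * l) ⊆ D →
          ∀ P : EuclideanSpace ℝ (Fin d) → ℝ,
            IsNearBestApprox ω n D f C₀ x₀ l P →
            ∃ g : EuclideanSpace ℝ (Fin d) → ℝ,
              (∀ᵐ y ∂(volume.restrict (cube x₀ l)),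
                Tendsto (fun ε : ℝ =>
                    ∫ x in {x ∈ cube x₀ (2 * l) | ε < dist y x},
                      (f x - P x) * K (y - x))
                  (𝓝[>] (0 : ℝ)) (𝓝 (g y))) ∧
              (ENNReal.ofReal (l ^ d))⁻¹ *
                  ∫⁻ y in cube x₀ l, ENNReal.ofReal |g y| ≤
                ENNReal.ofReal (C * ω l *
                  ((zygSeminorm ω n D f).toReal + ∫ x in D, |f x|)) := by
  rcases Nat.eq_zero_or_pos d with rfl | hd
  · refine ⟨1, one_pos, fun f _ _ _ x₀ l _ _ P _ => ⟨fun _ => 0, ?_, by simp⟩⟩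
    refine Eventually.of_forall fun y => ?_
    refine tendsto_const_nhds.congr' ?_
    filter_upwards [self_mem_nhdsWithin] with ε hε
    have h0 : {x ∈ cube x₀ (2 * l) | ε < dist y x} = ∅ := by
      ext x
      have h1 : dist y x = 0 := by rw [Subsingleton.elim y x, dist_self]
      have h2 : (0 : ℝ) < ε := hε
      simp [h1, h2.le]
    rw [h0, setIntegral_empty]
  obtain ⟨C, hC0, hC⟩ := local_pointwise hd ω hω D Ω K hΩ hK C₀ hC₀
  refine ⟨C + 1, by linarith, ?_⟩
  intro f _ hf hS x₀ l hl hsub P hP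
  have key := hC f hf hS x₀ l hl hsub P hP
  set S := (zygSeminorm ω n D f).toReal with hSdef
  have hS0 : 0 ≤ S := ENNReal.toReal_nonneg
  have hωl : 0 ≤ ω l := hω.nonneg l hl.le
  have hex : ∀ y, ∃ g : ℝ, y ∈ cube x₀ l →
      Tendsto (fun ε : ℝ => ∫ x in {x ∈ cube x₀ (2 * l) | ε < dist y x},
        (f x - P x) * K (y - x)) (𝓝[>] (0 : ℝ)) (𝓝 g) := by
    intro y
    by_cases hy : y ∈ cube x₀ l
    · obtain ⟨g, hg, -⟩ := key y hy 1 one_pos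
      exact ⟨g, fun _ => hg⟩
    · exact ⟨0, fun h => absurd h hy⟩
  choose g hg using hex
  refine ⟨g, ?_, ?_⟩
  · filter_upwards [ae_restrict_mem (cube_measurable x₀ l)] with y hy
    exact hg y hy
  have hL1 : 0 ≤ ∫ x in D, |f x| := integral_nonneg fun x => abs_nonneg _
  have hbound : ∀ y ∈ cube x₀ l, |g y| ≤ C * ω l * S := by
    intro y hy
    refine le_of_forall_pos_le_add fun e he => ?_
    have hb : 0 ≤ C * ω l := by positivity
    obtain ⟨g', hg', hgb'⟩ := key y hy (e / (C * ω l + 1)) (by positivity)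
    rw [tendsto_nhds_unique (hg y hy) hg']
    refine hgb'.trans ?_
    rw [mul_add]
    have : C * ω l * (e / (C * ω l + 1)) ≤ e := by
      rw [mul_div_assoc', div_le_iff₀ (by positivity)]
      nlinarith
    linarith
  have hfin : C * ω l * S ≤ (C + 1) * ω l * (S + ∫ x in D, |f x|) := by
    have : 0 ≤ C * ω l := by positivity
    gcongr
    · linarith
    · linarith
  calc (ENNReal.ofReal (l ^ d))⁻¹ * ∫⁻ y in cube x₀ l, ENNReal.ofReal |g y|
      ≤ (ENNReal.ofReal (l ^ d))⁻¹ *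
        ∫⁻ _y in cube x₀ l, ENNReal.ofReal ((C + 1) * ω l * (S + ∫ x in D, |f x|)) := by
        gcongr 1
        exact setLIntegral_mono' (cube_measurable x₀ l) fun y hy =>
          ENNReal.ofReal_le_ofReal ((hbound y hy).trans hfin)
    _ = ENNReal.ofReal ((C + 1) * ω l * (S + ∫ x in D, |f x|)) := by
        have hld : ENNReal.ofReal (l ^ d) ≠ 0 := by
          rw [ENNReal.ofReal_ne_zero_iff]; positivity
        rw [setLIntegral_const, cube_volume x₀ l hl.le, mul_comm, mul_assoc,
          ENNReal.mul_inv_cancel hld ENNReal.ofReal_ne_top, mul_one]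

end
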